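/- arXiv:math-ph/0606030 — 7 statements merged into one kernel-verified Lean document; each statement's English description precedes it below -/
import Mathlib

section
/- For every natural number n and all n×n complex matrices A and B, the determinant of the 2n×2n complex matrix R = A ⊗ I₂ + B ⊗ σ_y (the Kronecker product of A with the 2×2 identity plus the Kronecker product of B with the Pauli matrix σ_y) satisfies det R = det(A + B) · det(A − B). -/
/-!
The Pauli matrix is diagonalizable: `σ_y = P * diag(1, -1) * Q` with `Q = P⁻¹`. Conjugating
`A ⊗ I₂ + B ⊗ σ_y` by `1 ⊗ P` therefore yields `A ⊗ I₂ + B ⊗ diag(1, -1)`, which is the block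
diagonal matrix with blocks `A + B` and `A - B`; conjugation preserves the determinant.
-/

open scoped Kronecker

/-- The Pauli matrix `σ_y`. -/
noncomputable def sigmaY : Matrix (Fin 2) (Fin 2) ℂ :=
  !![0, -Complex.I; Complex.I, 0]

/-- Determinant part of Lemma 1: for `R = A ⊗ I₂ + B ⊗ σ_y`,
`det R = det (A + B) * det (A - B)`. -/
theorem det_kronecker_I2_add_kronecker_sigmaY (n : ℕ)
    (A B : Matrix (Fin n) (Fin n) ℂ) :
    (A ⊗ₖ (1 : Matrix (Fin 2) (Fin 2) ℂ) + B ⊗ₖ sigmaY).det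
      = (A + B).det * (A - B).det := by
  -- The columns of `P` are eigenvectors of `σ_y` for the eigenvalues `1` and `-1`.
  let P : Matrix (Fin 2) (Fin 2) ℂ := !![1, 1; Complex.I, -Complex.I]
  let Q : Matrix (Fin 2) (Fin 2) ℂ := !![1 / 2, -Complex.I / 2; 1 / 2, Complex.I / 2]
  let D : Matrix (Fin 2) (Fin 2) ℂ := !![1, 0; 0, -1]
  have hI : Complex.I * Complex.I = -1 := Complex.I_mul_I
  have hPQ : P * Q = 1 := by
    ext i j
    fin_cases i <;> fin_cases j <;> simp [P, Q, Matrix.mul_apply, Fin.sum_univ_two] <;> grind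
  have hPDQ : P * D * Q = sigmaY := by
    ext i j
    fin_cases i <;> fin_cases j <;>
      simp [P, Q, D, sigmaY, Matrix.mul_apply, Fin.sum_univ_two] <;> grind
  have hdet : ((1 : Matrix (Fin n) (Fin n) ℂ) ⊗ₖ P).det *
      ((1 : Matrix (Fin n) (Fin n) ℂ) ⊗ₖ Q).det = 1 := by
    rw [← Matrix.det_mul, ← Matrix.mul_kronecker_mul, hPQ]
    simp
  have hblock : A ⊗ₖ (1 : Matrix (Fin 2) (Fin 2) ℂ) + B ⊗ₖ D
      = Matrix.blockDiagonal ![A + B, A - B] := by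
    ext ⟨i, a⟩ ⟨j, b⟩
    fin_cases a <;> fin_cases b <;>
      simp [D, Matrix.blockDiagonal_apply, sub_eq_add_neg]
  have hconj : A ⊗ₖ (1 : Matrix (Fin 2) (Fin 2) ℂ) + B ⊗ₖ sigmaY
      = (1 : Matrix (Fin n) (Fin n) ℂ) ⊗ₖ P * Matrix.blockDiagonal ![A + B, A - B] *
        (1 : Matrix (Fin n) (Fin n) ℂ) ⊗ₖ Q := by
    rw [← hblock, Matrix.mul_add, Matrix.add_mul]
    simp only [← Matrix.mul_kronecker_mul, Matrix.one_mul, Matrix.mul_one, hPQ, hPDQ]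
  rw [hconj, Matrix.det_mul, Matrix.det_mul, mul_right_comm, hdet, one_mul,
    Matrix.det_blockDiagonal, Fin.prod_univ_two]
  rfl
end

section
/- Let n be a natural number and let A and B be n×n complex matrices such that both A + B and A − B are invertible. Then the 2n×2n matrix R = A ⊗ I₂ + B ⊗ σ_y is invertible and its inverse is R⁻¹ = ½[(A+B)⁻¹ + (A−B)⁻¹] ⊗ I₂ + ½[(A+B)⁻¹ − (A−B)⁻¹] ⊗ σ_y. -/
/-! Since `σ_y² = 1`, the product `(A ⊗ 1 + B ⊗ σ_y) (P ⊗ 1 + Q ⊗ σ_y)` equals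
`(A P + B Q) ⊗ 1 + (A Q + B P) ⊗ σ_y`. For `P, Q = ½ ((A + B)⁻¹ ± (A - B)⁻¹)` the two coefficients
are `½ ((A + B)(A + B)⁻¹ ± (A - B)(A - B)⁻¹)`, that is `1` and `0`, so the claimed inverse is a
right inverse, which suffices for square matrices. -/

open scoped Kronecker

theorem sigmaY_mul_sigmaY : sigmaY * sigmaY = 1 := by
  ext i j
  fin_cases i <;> fin_cases j <;> simp [sigmaY, Matrix.mul_apply]

/-- Inverse part of Lemma 1: if `A + B` and `A - B` are invertible then
`R = A ⊗ I₂ + B ⊗ σ_y` is invertible with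
`R⁻¹ = ½[(A+B)⁻¹ + (A−B)⁻¹] ⊗ I₂ + ½[(A+B)⁻¹ − (A−B)⁻¹] ⊗ σ_y`. -/
theorem inv_kronecker_I2_add_kronecker_sigmaY (n : ℕ)
    (A B : Matrix (Fin n) (Fin n) ℂ)
    (h₁ : IsUnit (A + B)) (h₂ : IsUnit (A - B)) :
    IsUnit (A ⊗ₖ (1 : Matrix (Fin 2) (Fin 2) ℂ) + B ⊗ₖ sigmaY) ∧
    (A ⊗ₖ (1 : Matrix (Fin 2) (Fin 2) ℂ) + B ⊗ₖ sigmaY)⁻¹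
      = (2⁻¹ : ℂ) • (((A + B)⁻¹ + (A - B)⁻¹) ⊗ₖ (1 : Matrix (Fin 2) (Fin 2) ℂ))
        + (2⁻¹ : ℂ) • (((A + B)⁻¹ - (A - B)⁻¹) ⊗ₖ sigmaY) := by
  have hU : (A + B) * (A + B)⁻¹ = 1 :=
    Matrix.mul_nonsing_inv _ ((Matrix.isUnit_iff_isUnit_det _).1 h₁)
  have hV : (A - B) * (A - B)⁻¹ = 1 :=
    Matrix.mul_nonsing_inv _ ((Matrix.isUnit_iff_isUnit_det _).1 h₂)
  generalize (A + B)⁻¹ = U at *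
  generalize (A - B)⁻¹ = V at *
  have hone : A * (U + V) + B * (U - V) = (2 : ℂ) • 1 := by
    calc A * (U + V) + B * (U - V) = (A + B) * U + (A - B) * V := by noncomm_ring
      _ = (2 : ℂ) • 1 := by rw [hU, hV, two_smul]
  have hzero : A * (U - V) + B * (U + V) = 0 := by
    calc A * (U - V) + B * (U + V) = (A + B) * U - (A - B) * V := by noncomm_ring
      _ = 0 := by rw [hU, hV, sub_self]
  have key : (A ⊗ₖ (1 : Matrix (Fin 2) (Fin 2) ℂ) + B ⊗ₖ sigmaY) *
      ((2⁻¹ : ℂ) • ((U + V) ⊗ₖ (1 : Matrix (Fin 2) (Fin 2) ℂ))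
        + (2⁻¹ : ℂ) • ((U - V) ⊗ₖ sigmaY)) = 1 := by
    calc _ = (2⁻¹ : ℂ) • ((A * (U + V) + B * (U - V)) ⊗ₖ (1 : Matrix (Fin 2) (Fin 2) ℂ)
          + (A * (U - V) + B * (U + V)) ⊗ₖ sigmaY) := by
          rw [← smul_add, Matrix.mul_smul, add_mul, mul_add, mul_add]
          simp only [← Matrix.mul_kronecker_mul, sigmaY_mul_sigmaY, mul_one, one_mul]
          rw [Matrix.add_kronecker (A * (U + V)), Matrix.add_kronecker (A * (U - V))]
          congr 1
          abel
      _ = 1 := by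
          rw [hone, hzero, Matrix.zero_kronecker, add_zero, Matrix.smul_kronecker,
            Matrix.one_kronecker_one, smul_smul]
          norm_num
  exact ⟨IsUnit.of_mul_eq_one _ key, Matrix.inv_eq_right_inv key⟩
end

section
/- Let A and B be n×n real matrices with A symmetric (Aᵀ = A) and B antisymmetric (Bᵀ = −B), and regard them as complex matrices via the inclusion ℝ ⊆ ℂ. Then det(A ⊗ I₂ + B ⊗ σ_y) = (det(A + B))². In particular this determinant is a real, nonnegative number. -/
/-!
The Pauli matrix `σ_y` is diagonalizable with eigenvalues `1` and `-1`. Conjugating by `1 ⊗ P`, where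
the columns of `P` are the eigenvectors `(1, i)` and `(1, -i)`, turns `A ⊗ I₂ + B ⊗ σ_y` into a block
diagonal matrix with blocks `A + B` and `A - B`. Since `A - B = (A + B)ᵀ`, both blocks have the same
determinant.
-/

open Matrix

open scoped Kronecker

/-- Eigenvectors of `sigmaY`, as columns, for the eigenvalues `1` and `-1` in this order. -/
noncomputable def sigmaYEigvecs : Matrix (Fin 2) (Fin 2) ℂ :=
  !![1, 1; Complex.I, -Complex.I]

lemma sigmaY_mul_eigvecs :
    sigmaY * sigmaYEigvecs = sigmaYEigvecs * diagonal ![1, -1] := by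
  ext i j
  fin_cases i <;> fin_cases j <;>
    simp [sigmaY, sigmaYEigvecs, Matrix.mul_apply, Fin.sum_univ_two, diagonal]

lemma det_sigmaYEigvecs_ne_zero : sigmaYEigvecs.det ≠ 0 := by
  have h : sigmaYEigvecs.det = -2 * Complex.I := by
    simp only [sigmaYEigvecs, det_fin_two_of]
    ring
  simp [h]

/-- Without any symmetry assumption, the determinant splits over the two eigenvalues of `σ_y`. -/
lemma det_kronecker_sigmaY {n : ℕ} (A B : Matrix (Fin n) (Fin n) ℂ) :
    (A ⊗ₖ (1 : Matrix (Fin 2) (Fin 2) ℂ) + B ⊗ₖ sigmaY).det = (A + B).det * (A - B).det := by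
  set Q := (1 : Matrix (Fin n) (Fin n) ℂ) ⊗ₖ sigmaYEigvecs with hQ
  have hQ0 : Q.det ≠ 0 := by
    rw [hQ, det_kronecker]
    simp [det_sigmaYEigvecs_ne_zero]
  have hblock : A ⊗ₖ (1 : Matrix (Fin 2) (Fin 2) ℂ) + B ⊗ₖ diagonal ![1, -1]
      = blockDiagonal ![A + B, A - B] := by
    ext ⟨i, a⟩ ⟨j, b⟩
    fin_cases a <;> fin_cases b <;> simp [blockDiagonal_apply, sub_eq_add_neg]
  have hconj : (A ⊗ₖ (1 : Matrix (Fin 2) (Fin 2) ℂ) + B ⊗ₖ sigmaY) * Q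
      = Q * blockDiagonal ![A + B, A - B] := by
    rw [← hblock, hQ, add_mul, mul_add]
    simp only [← mul_kronecker_mul, sigmaY_mul_eigvecs, one_mul, mul_one]
  have hdet := congrArg det hconj
  rw [det_mul, det_mul, mul_comm, det_blockDiagonal, Fin.prod_univ_two] at hdet
  exact mul_left_cancel₀ hQ0 hdet

/-- For real `A` symmetric and `B` antisymmetric,
`det (A ⊗ I₂ + B ⊗ σ_y) = (det (A + B))²`, a real nonnegative number. -/
theorem det_kronecker_symm_antisymm_sq (n : ℕ)
    (A B : Matrix (Fin n) (Fin n) ℝ)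
    (hA : A.IsSymm) (hB : Bᵀ = -B) :
    ((A.map (Complex.ofReal)) ⊗ₖ (1 : Matrix (Fin 2) (Fin 2) ℂ)
        + (B.map (Complex.ofReal)) ⊗ₖ sigmaY).det
      = (((A + B).det : ℝ) : ℂ) ^ 2 ∧
    (0 : ℝ) ≤ ((A + B).det) ^ 2 := by
  refine ⟨?_, sq_nonneg _⟩
  have hadd : A.map Complex.ofReal + B.map Complex.ofReal = (A + B).map Complex.ofReal := by
    ext i j
    simp
  have hsub : A.map Complex.ofReal - B.map Complex.ofReal = (A - B).map Complex.ofReal := by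
    ext i j
    simp
  have htr : A - B = (A + B)ᵀ := by
    rw [transpose_add, hA.eq, hB, sub_eq_add_neg]
  have hdet (M : Matrix (Fin n) (Fin n) ℝ) : (M.map Complex.ofReal).det = (M.det : ℂ) :=
    (Complex.ofRealHom.map_det M).symm
  rw [det_kronecker_sigmaY, hadd, hsub, hdet, hdet, htr, det_transpose, sq]
end

section
/- Let m and n be natural numbers, let A and B be n×n complex matrices, and let σ be the 2m×2m block-diagonal matrix consisting of m copies of σ_y on the diagonal (equivalently σ = I_m ⊗ σ_y). Then det(A ⊗ I_{2m} + B ⊗ σ) = (det(A + B))^m · (det(A − B))^m. In particular, if A and B are real with A symmetric and B antisymmetric, this determinant equals (det(A + B))^{2m}. -/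
/-!
The matrix `σ_y` has eigenvalues `1` and `-1`, so `σ = I_m ⊗ σ_y` is diagonalizable, with each of
these eigenvalues of multiplicity `m`. Conjugating the second tensor factor by an eigenbasis turns
`A ⊗ I + B ⊗ σ` into a block diagonal matrix with blocks `A + d B`, `d` running over the
eigenvalues of `σ` (`det_kronecker_one_add_kronecker`), which gives the first formula.
For `A` symmetric and `B` antisymmetric, `A - B = (A + B)ᵀ`, so the two factors coincide.
-/

open Matrix

open scoped Kronecker

/-- If `S * diagonal d * T` is a diagonalization (with `T` inverse to `S`), then conjugation by
`1 ⊗ S` makes `A ⊗ 1 + B ⊗ (S * diagonal d * T)` block diagonal with blocks `A + d k • B`. -/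
lemma det_kronecker_one_add_kronecker {ι κ R : Type*} [Fintype ι] [DecidableEq ι]
    [Fintype κ] [DecidableEq κ] [CommRing R] (A B : Matrix ι ι R) (S T : Matrix κ κ R)
    (hST : S * T = 1) (d : κ → R) :
    (A ⊗ₖ (1 : Matrix κ κ R) + B ⊗ₖ (S * diagonal d * T)).det = ∏ k, (A + d k • B).det := by
  have hconj : A ⊗ₖ (1 : Matrix κ κ R) + B ⊗ₖ (S * diagonal d * T)
      = ((1 : Matrix ι ι R) ⊗ₖ S) * (A ⊗ₖ (1 : Matrix κ κ R) + B ⊗ₖ diagonal d)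
        * ((1 : Matrix ι ι R) ⊗ₖ T) := by
    simp only [mul_add, add_mul, ← mul_kronecker_mul, one_mul, mul_one, hST]
  have hblock : A ⊗ₖ (1 : Matrix κ κ R) + B ⊗ₖ diagonal d
      = blockDiagonal fun k => A + d k • B := by
    ext ⟨i, k⟩ ⟨j, l⟩
    by_cases h : k = l
    · subst h
      simp [blockDiagonal_apply, mul_comm]
    · simp [blockDiagonal_apply, h]
  have hunit : ((1 : Matrix ι ι R) ⊗ₖ S).det * ((1 : Matrix ι ι R) ⊗ₖ T).det = 1 := by
    rw [← det_mul, ← mul_kronecker_mul, hST, one_mul, one_kronecker_one, det_one]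
  rw [hconj, det_mul, det_mul, mul_right_comm, hunit, one_mul, hblock, det_blockDiagonal]

/-- A diagonalization of `σ_y`: the columns `(1, i)` and `(1, -i)` of the left factor are
eigenvectors for `1` and `-1`. -/
lemma exists_sigmaY_diagonalization : ∃ P Q : Matrix (Fin 2) (Fin 2) ℂ,
    P * Q = 1 ∧ sigmaY = P * diagonal ![1, -1] * Q := by
  refine ⟨!![1, 1; Complex.I, -Complex.I], !![1/2, -Complex.I/2; 1/2, Complex.I/2], ?_, ?_⟩
  · ext i j
    fin_cases i <;> fin_cases j <;> simp [Matrix.mul_apply, Fin.sum_univ_two] <;>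
      ring_nf <;> simp
  · ext i j
    fin_cases i <;> fin_cases j <;>
      simp [sigmaY, Matrix.mul_apply, Fin.sum_univ_two, vecMul_diagonal] <;> ring_nf

lemma det_kronecker_one_kronecker_sigmaY (m n : ℕ) (A B : Matrix (Fin n) (Fin n) ℂ) :
    (A ⊗ₖ (1 : Matrix (Fin m × Fin 2) (Fin m × Fin 2) ℂ)
        + B ⊗ₖ ((1 : Matrix (Fin m) (Fin m) ℂ) ⊗ₖ sigmaY)).det
      = (A + B).det ^ m * (A - B).det ^ m := by
  obtain ⟨P, Q, hPQ, hσ⟩ := exists_sigmaY_diagonalization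
  have hdiag : (1 : Matrix (Fin m) (Fin m) ℂ) ⊗ₖ sigmaY
      = ((1 : Matrix (Fin m) (Fin m) ℂ) ⊗ₖ P)
        * diagonal (fun p : Fin m × Fin 2 => (![1, -1] : Fin 2 → ℂ) p.2)
        * ((1 : Matrix (Fin m) (Fin m) ℂ) ⊗ₖ Q) := by
    have h := diagonal_kronecker_diagonal (fun _ : Fin m => (1 : ℂ)) ![1, -1]
    simp only [one_mul, diagonal_one] at h
    rw [← h, ← mul_kronecker_mul, ← mul_kronecker_mul, one_mul, one_mul, hσ]
  rw [hdiag, det_kronecker_one_add_kronecker]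
  · simp [Fintype.prod_prod_type, Fin.prod_univ_two, sub_eq_add_neg, mul_pow]
  · rw [← mul_kronecker_mul, hPQ, one_mul, one_kronecker_one]

/-- For `σ = I_m ⊗ σ_y` (the block diagonal matrix of `m` copies of `σ_y`),
`det (A ⊗ I_{2m} + B ⊗ σ) = det (A + B) ^ m * det (A - B) ^ m`; in particular
for real `A` symmetric and `B` antisymmetric this equals `det (A + B) ^ (2m)`. -/
theorem det_kronecker_blockSigma (m n : ℕ) (A B : Matrix (Fin n) (Fin n) ℂ) :
    (A ⊗ₖ (1 : Matrix (Fin m × Fin 2) (Fin m × Fin 2) ℂ)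
        + B ⊗ₖ ((1 : Matrix (Fin m) (Fin m) ℂ) ⊗ₖ sigmaY)).det
      = (A + B).det ^ m * (A - B).det ^ m ∧
    ∀ (A₀ B₀ : Matrix (Fin n) (Fin n) ℝ), A₀.IsSymm → B₀ᵀ = -B₀ →
      ((A₀.map (Complex.ofReal)) ⊗ₖ (1 : Matrix (Fin m × Fin 2) (Fin m × Fin 2) ℂ)
          + (B₀.map (Complex.ofReal)) ⊗ₖ ((1 : Matrix (Fin m) (Fin m) ℂ) ⊗ₖ sigmaY)).det
        = (((A₀ + B₀).det : ℝ) : ℂ) ^ (2 * m) := by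
  refine ⟨det_kronecker_one_kronecker_sigmaY m n A B, fun A₀ B₀ hA hB => ?_⟩
  have hdet : (A₀ - B₀).det = (A₀ + B₀).det := by
    rw [← det_transpose (A₀ + B₀), transpose_add, hA.eq, hB, sub_eq_add_neg]
  have hadd : (A₀.map Complex.ofReal + B₀.map Complex.ofReal).det = ((A₀ + B₀).det : ℂ) := by
    rw [← Matrix.map_add _ Complex.ofReal_add]
    exact (Complex.ofRealHom.map_det _).symm
  have hsub : (A₀.map Complex.ofReal - B₀.map Complex.ofReal).det = ((A₀ - B₀).det : ℂ) := by
    rw [← Matrix.map_sub _ Complex.ofReal_sub]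
    exact (Complex.ofRealHom.map_det _).symm
  rw [det_kronecker_one_kronecker_sigmaY, hadd, hsub, hdet, two_mul, pow_add]
end

section
/- Let N be a natural number, let a₁,…,a_N be positive real numbers, let A be the N×N diagonal matrix with diagonal entries a₁,…,a_N, and let B be an N×N real skew-symmetric matrix (Bᵀ = −B). Then det(A + B) ≥ Π_{i=1}^N a_i > 0; in particular A + B is invertible. -/
/-!
Conjugating by `diag(√aᵢ)⁻¹` reduces the claim to `1 ≤ det (1 + K)` for a real skew-symmetric `K`.
Since `(1 + K)ᵀ (1 + K) = 1 + Kᵀ K` and `Kᵀ K` is positive semidefinite, `det (1 + K) ^ 2 ≥ 1`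
(`one_le_det_one_add_posSemidef`). Hence `t ↦ det (1 + t K)` is continuous and never vanishes; as
it equals `1` at `t = 0`, it is positive at `t = 1`, and so `det (1 + K) ≥ 1`
(`one_le_det_one_add_skew`).
-/

open Matrix

theorem one_le_det_one_add_posSemidef {n : Type*} [Fintype n] [DecidableEq n]
    {P : Matrix n n ℝ} (hP : P.PosSemidef) : 1 ≤ (1 + P).det := by
  have hH : (1 + P).IsHermitian := isHermitian_one.add hP.1
  rw [hH.det_eq_prod_eigenvalues]
  refine Finset.one_le_prod fun i _ => ?_
  have hv : star ⇑(hH.eigenvectorBasis i) ⬝ᵥ ⇑(hH.eigenvectorBasis i) = 1 := by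
    rw [dotProduct_comm, ← EuclideanSpace.inner_eq_star_dotProduct, real_inner_self_eq_norm_sq,
      hH.eigenvectorBasis.orthonormal.1 i, one_pow]
  -- The eigenvalue is the Rayleigh quotient `vᵀ (1 + P) v = 1 + vᵀ P v` of its unit eigenvector.
  rw [hH.eigenvalues_eq i, add_mulVec, one_mulVec, dotProduct_add, hv]
  simpa using hP.dotProduct_mulVec_nonneg ⇑(hH.eigenvectorBasis i)

theorem one_le_det_one_add_skew_sq {n : Type*} [Fintype n] [DecidableEq n]
    {K : Matrix n n ℝ} (hK : Kᵀ = -K) : 1 ≤ (1 + K).det ^ 2 := by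
  have hfac : (1 + K)ᵀ * (1 + K) = 1 + Kᴴ * K := by
    rw [conjTranspose_eq_transpose_of_trivial, transpose_add, transpose_one, hK]
    noncomm_ring
  calc 1 ≤ (1 + Kᴴ * K).det :=
        one_le_det_one_add_posSemidef (posSemidef_conjTranspose_mul_self K)
    _ = (1 + K).det ^ 2 := by rw [← hfac, det_mul, det_transpose, sq]

theorem one_le_det_one_add_skew {n : Type*} [Fintype n] [DecidableEq n]
    {K : Matrix n n ℝ} (hK : Kᵀ = -K) : 1 ≤ (1 + K).det := by
  have hsq (t : ℝ) : 1 ≤ (1 + t • K).det ^ 2 :=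
    one_le_det_one_add_skew_sq (by rw [transpose_smul, hK, smul_neg])
  have hcont : Continuous fun t : ℝ => (1 + t • K).det := by fun_prop
  have hpos : 0 < (1 + K).det := by
    by_contra! hneg
    obtain ⟨t, ht⟩ := mem_range_of_exists_le_of_exists_ge hcont (c := 0)
      ⟨1, by simpa using hneg⟩ ⟨0, by simp⟩
    have := hsq t
    simp only at ht
    norm_num [ht] at this
  have := hsq 1
  rw [one_smul] at this
  nlinarith

/-- For `A = diag(a₁,…,a_N)` with all `aᵢ > 0` and `B` real skew-symmetric,
`det (A + B) ≥ Π aᵢ > 0`; in particular `A + B` is invertible. -/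
theorem det_diagonal_add_skew_pos (N : ℕ) (a : Fin N → ℝ) (ha : ∀ i, 0 < a i)
    (B : Matrix (Fin N) (Fin N) ℝ) (hB : Bᵀ = -B) :
    (∏ i, a i) ≤ (Matrix.diagonal a + B).det ∧ 0 < ∏ i, a i ∧
      IsUnit (Matrix.diagonal a + B) := by
  have hprod : 0 < ∏ i, a i := Finset.prod_pos fun i _ => ha i
  have hle : (∏ i, a i) ≤ (diagonal a + B).det := by
    set s : Fin N → ℝ := fun i => √(a i)
    have hs (i) : s i ≠ 0 := (Real.sqrt_pos.2 (ha i)).ne'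
    have hss (i) : s i * s i = a i := Real.mul_self_sqrt (ha i).le
    set K : Matrix (Fin N) (Fin N) ℝ := diagonal s⁻¹ * B * diagonal s⁻¹
    have hK : Kᵀ = -K := by
      simp [K, transpose_mul, hB, Matrix.mul_assoc]
    have hfac : diagonal a + B = diagonal s * (1 + K) * diagonal s := by
      ext i j
      have hi := hs i
      have hj := hs j
      rcases eq_or_ne i j with rfl | hij
      · simp [K, ← hss]
        field_simp
      · simp [K, hij]
        field_simp
    have hdet : (diagonal a + B).det = (∏ i, a i) * (1 + K).det := by
      rw [hfac, det_mul, det_mul, det_diagonal]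
      simp only [← hss, Finset.prod_mul_distrib]
      ring
    rw [hdet]
    exact le_mul_of_one_le_right hprod.le (one_le_det_one_add_skew hK)
  exact ⟨hle, hprod, (isUnit_iff_isUnit_det _).2 (hprod.trans_le hle).ne'.isUnit⟩
end

section
/- Let N be a natural number and let B be an N×N skew-symmetric matrix with integer entries. Then there exists a family of integers (m_K), indexed by the subsets K ⊆ {1,…,N}, with m_K = 0 whenever N − |K| is odd, such that for every choice of real numbers a₁,…,a_N one has det(diag(a₁,…,a_N) + B) = Σ_{K ⊆ {1,…,N}} m_K² · Π_{i∈K} a_i. -/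
open Matrix

/-!
Expanding `det (diag a + B)` multilinearly in the rows gives one term for each set `K` of rows taken
from `diag a`. Such a mixed matrix is block triangular, so its determinant is `∏ i ∈ K, a i` times
the principal minor of `B` on the complement of `K` (`det_diagonal_add_expand`).

Each of these minors is the determinant of a skew-symmetric integer matrix. It vanishes in odd size
because `det A = det Aᵀ = (-1) ^ n * det A`. In every size it is a perfect square: over `ℚ`, split
off a block `!![0, x; -x, 0]` with `x ≠ 0`, of determinant `x ^ 2`; its Schur complement is again
skew-symmetric, so induction on the size applies (`isSquare_det_of_skew_rat`). An integer which is
a rational square is an integer square.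
-/

/-- The determinant of a skew-symmetric rational matrix is a square. -/
theorem isSquare_det_of_skew_rat (k : ℕ) :
    ∀ (n : Type) [Fintype n] [DecidableEq n] (A : Matrix n n ℚ),
      Fintype.card n = k → Aᵀ = -A → IsSquare A.det := by
  induction k using Nat.strong_induction_on with
  | _ k ih =>
    intro n _ _ A hk hA
    have hskew : ∀ i j, A j i = -A i j := fun i j => congrFun (congrFun hA i) j
    have hdiag : ∀ i, A i i = 0 := fun i => by linarith [hskew i i]
    by_cases h0 : A = 0
    · subst h0
      rcases isEmpty_or_nonempty n with h | h
      · simp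
      · simp [Matrix.det_zero]
    · obtain ⟨i, j, hij⟩ : ∃ i j, A i j ≠ 0 := by
        by_contra! h
        exact h0 (Matrix.ext h)
      have hne : i ≠ j := by
        rintro rfl
        exact hij (hdiag i)
      let p : n → Prop := fun l => l = i ∨ l = j
      let f : Fin 2 → {l // p l} := ![⟨i, Or.inl rfl⟩, ⟨j, Or.inr rfl⟩]
      have hf : Function.Bijective f := by
        constructor
        · intro a b hab
          have h := congrArg Subtype.val hab
          fin_cases a <;> fin_cases b <;> first | rfl | exact absurd h hne | exact absurd h.symm hne
        · rintro ⟨l, rfl | rfl⟩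
          · exact ⟨0, rfl⟩
          · exact ⟨1, rfl⟩
      have hdet : (A.toBlock p p).det = A i j * A i j := by
        rw [← Matrix.det_submatrix_equiv_self (Equiv.ofBijective f hf), Matrix.det_fin_two]
        simp [f, Matrix.toBlock, hdiag, hskew i j]
      have hunit : IsUnit (A.toBlock p p).det := by
        rw [hdet]
        exact (mul_ne_zero hij hij).isUnit
      let _ : Invertible (A.toBlock p p) := Matrix.invertibleOfIsUnitDet _ hunit
      have hb : ∀ q r : n → Prop, (A.toBlock q r)ᵀ = -A.toBlock r q := by
        intro q r
        ext x y
        exact hskew _ _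
      rw [Matrix.det_toBlock A p, Matrix.det_fromBlocks₁₁, hdet]
      refine (IsSquare.mul_self _).mul (ih _ ?_ _ _ rfl ?_)
      · rw [← hk]
        exact Fintype.card_subtype_lt (x := i) (by simp [p])
      · have hinv : (-A.toBlock p p)⁻¹ = -(A.toBlock p p)⁻¹ :=
          Matrix.inv_eq_right_inv (by rw [neg_mul_neg, Matrix.mul_nonsing_inv _ hunit])
        rw [Matrix.invOf_eq_nonsing_inv, Matrix.transpose_sub, Matrix.transpose_mul,
          Matrix.transpose_mul, Matrix.transpose_nonsing_inv, hb, hb, hb, hb, hinv]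
        simp only [Matrix.neg_mul, Matrix.mul_neg, neg_neg, Matrix.mul_assoc]
        abel

theorem isSquare_det_of_skew_int {n : Type} [Fintype n] [DecidableEq n] (A : Matrix n n ℤ)
    (hA : Aᵀ = -A) : IsSquare A.det := by
  rw [← Rat.isSquare_intCast_iff, Int.cast_det]
  refine isSquare_det_of_skew_rat _ n _ rfl ?_
  ext i j
  have h : A j i = -A i j := congrFun (congrFun hA i) j
  simp [h]

theorem det_eq_zero_of_skew_of_odd {n : Type} [Fintype n] [DecidableEq n] (A : Matrix n n ℤ)
    (hA : Aᵀ = -A) (hn : Odd (Fintype.card n)) : A.det = 0 := by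
  have h := Matrix.det_transpose A
  rw [hA, Matrix.det_neg, hn.neg_one_pow] at h
  linarith

/-- The expansion of `det (diag a + B)` in monomials in `a`; the coefficients are the principal
minors of `B`. -/
theorem det_diagonal_add_expand {n : Type} [Fintype n] [DecidableEq n] {R : Type*} [CommRing R]
    (a : n → R) (B : Matrix n n R) :
    (Matrix.diagonal a + B).det =
      ∑ K : Finset n, (B.toBlock (fun i => ¬ i ∈ K) (fun i => ¬ i ∈ K)).det * ∏ i ∈ K, a i := by
  have h := (Matrix.detRowAlternating (n := n) (R := R)).map_add_univ (Matrix.diagonal a) B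
  refine h.trans (Finset.sum_congr rfl fun K _ => ?_)
  change Matrix.det (Matrix.of (K.piecewise (Matrix.diagonal a) B)) = _
  rw [Matrix.twoBlockTriangular_det' _ (fun i => i ∈ K), mul_comm]
  · congr 1
    · congr 1
      ext x y
      simp [Matrix.toBlock, Matrix.toSquareBlockProp, Finset.piecewise, x.2]
    · have : Matrix.toSquareBlockProp (Matrix.of (K.piecewise (Matrix.diagonal a) B))
          (fun i => i ∈ K) = Matrix.diagonal (fun i : {i // i ∈ K} => a i) := by
        ext x y
        by_cases hxy : x = y
        · subst hxy
          simp [Matrix.toSquareBlockProp, Finset.piecewise]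
        · have hxy' : (x : n) ≠ y := fun h => hxy (Subtype.ext h)
          simp [Matrix.toSquareBlockProp, Finset.piecewise, hxy, hxy']
      rw [this]
      exact (@Matrix.det_diagonal _ _ (_) _ _ _).trans
        (Finset.prod_subtype K (fun _ => Iff.rfl) a).symm
  · intro i hi j hj
    have hij : i ≠ j := by
      rintro rfl
      exact hj hi
    simp [Finset.piecewise, hi, hij]

/-- Abstract content of Lemma 3: for an integer skew-symmetric matrix `B`
there are integers `m_K`, vanishing when `N - |K|` is odd, such that for all
real `a₁,…,a_N` one has
`det (diag(a) + B) = Σ_K m_K² Π_{i∈K} a_i`. -/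
theorem det_diagonal_add_int_skew_sq_coeffs (N : ℕ)
    (B : Matrix (Fin N) (Fin N) ℤ) (hB : Bᵀ = -B) :
    ∃ m : Finset (Fin N) → ℤ,
      (∀ K : Finset (Fin N), Odd (N - K.card) → m K = 0) ∧
      ∀ a : Fin N → ℝ,
        (Matrix.diagonal a + B.map (Int.cast : ℤ → ℝ)).det
          = ∑ K : Finset (Fin N), (m K : ℝ) ^ 2 * ∏ i ∈ K, a i := by
  have hskew : ∀ K : Finset (Fin N), (B.toBlock (fun i => ¬ i ∈ K) (fun i => ¬ i ∈ K))ᵀ =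
      -B.toBlock (fun i => ¬ i ∈ K) (fun i => ¬ i ∈ K) := by
    intro K
    ext x y
    exact congrFun (congrFun hB x) y
  choose m hm using fun K => isSquare_det_of_skew_int _ (hskew K)
  refine ⟨m, fun K hK => ?_, fun a => ?_⟩
  · have h0 := det_eq_zero_of_skew_of_odd _ (hskew K)
      (by simpa [Fintype.card_subtype_compl] using hK)
    rw [hm] at h0
    exact mul_self_eq_zero.mp h0
  · rw [det_diagonal_add_expand]
    refine Finset.sum_congr rfl fun K _ => ?_
    congr 1
    have h := congrArg (Int.cast : ℤ → ℝ) (hm K)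
    rw [Int.cast_det, Int.cast_mul, ← sq] at h
    exact h
end

section
/- Let N be a natural number and let B be an N×N real skew-symmetric matrix. Then there exists a family of vectors v_K ∈ ℝ^N, indexed by the subsets K ⊆ {1,…,N} and not depending on the diagonal entries below, such that for every choice of real numbers a₁,…,a_N for which M = diag(a₁,…,a_N) + B is invertible, one has det(M) · ½(M⁻¹ + (M⁻¹)ᵀ) = Σ_{K ⊆ {1,…,N}} (Π_{i∈K} a_i) · v_K v_Kᵀ, where v_K v_Kᵀ denotes the rank-one outer-product matrix with entries (v_K)_τ (v_K)_{τ'}. In particular, when all a_i > 0, the matrix det(M) · ½(M⁻¹ + (M⁻¹)ᵀ) is a nonnegative linear combination of rank-one positive semidefinite matrices. -/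
/-!
Multiplying by the determinant turns `M⁻¹` into the adjugate of `M = diag(a) + B`. Expanding each
cofactor multilinearly in the rows of `M` (`adjugate_diagonal_add_apply`), the coefficient of
`∏ i ∈ K, a i` is the adjugate of the principal submatrix of `B` on the complement of `K`, padded
by zeros. That submatrix is again skew-symmetric, so it remains to see that the symmetric part of
the adjugate of a skew-symmetric matrix `C` of size `n` has the form `v vᵀ`
(`exists_symm_part_adjugate_eq`). No Pfaffians are needed for this existence statement:

* if `n` is even, `adj C` is skew-symmetric and `v = 0` works;
* if `n` is odd, `adj C` is symmetric and `det C = 0`. The columns of `adj C` lie in the kernel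
  of `C`, which is at most one-dimensional as soon as `adj C ≠ 0`
  (`adjugate_mul_adjugate_of_ne_zero`), so `adj C` has rank at most one. Its diagonal entries are
  determinants of skew-symmetric matrices, hence nonnegative (`det_nonneg_of_skew`), so
  `adj C = v vᵀ` for a real vector `v`.
-/

open Matrix

/-- Along the segment from `1` to `B`, the matrix `(1 - s) • 1 + s • B` is nonsingular for `s ≠ 1`,
because the skew part drops out of its quadratic form; so the determinant cannot change sign. -/
lemma det_nonneg_of_skew {n : Type*} [Fintype n] [DecidableEq n]
    (B : Matrix n n ℝ) (hB : Bᵀ = -B) : 0 ≤ B.det := by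
  by_contra! hneg
  have hquad : ∀ v : n → ℝ, v ⬝ᵥ (B *ᵥ v) = 0 := by
    intro v
    have h : v ⬝ᵥ (B *ᵥ v) = -(v ⬝ᵥ (B *ᵥ v)) := by
      conv_lhs => rw [dotProduct_mulVec, ← mulVec_transpose, hB, neg_mulVec, neg_dotProduct,
        dotProduct_comm]
    linarith
  let f : ℝ → ℝ := fun s => ((1 - s) • (1 : Matrix n n ℝ) + s • B).det
  have hf : Continuous f := by
    apply Continuous.matrix_det
    fun_prop
  have h0 : f 0 = 1 := by simp [f]
  have h1 : f 1 = B.det := by simp [f]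
  obtain ⟨s, -, hs⟩ := intermediate_value_Icc' (zero_le_one' ℝ) hf.continuousOn
    (show (0 : ℝ) ∈ Set.Icc (f 1) (f 0) by rw [h0, h1]; exact ⟨hneg.le, zero_le_one⟩)
  have hs1 : s ≠ 1 := by
    rintro rfl
    rw [h1] at hs
    exact hneg.ne hs
  obtain ⟨v, hv, hv0⟩ := exists_mulVec_eq_zero_iff.mpr hs
  have h := congrArg (v ⬝ᵥ ·) hv0
  simp only [add_mulVec, smul_mulVec, one_mulVec, dotProduct_add, dotProduct_smul, hquad,
    dotProduct_zero, smul_eq_mul, mul_zero, add_zero] at h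
  rcases mul_eq_zero.mp h with h | h
  · exact hs1 (by linarith)
  · exact hv (dotProduct_self_eq_zero.mp h)

lemma det_eq_of_unit_rows {n : Type*} [Fintype n] [DecidableEq n]
    (M : Matrix n n ℝ) (p : n → Prop) [DecidablePred p]
    (h : ∀ i, p i → ∀ j, M i j = if i = j then 1 else 0) :
    M.det = (toSquareBlockProp M fun i => ¬p i).det := by
  rw [twoBlockTriangular_det' M p]
  · have h1 : toSquareBlockProp M p = 1 := by
      ext ⟨x, hx⟩ ⟨y, hy⟩
      simp [toSquareBlockProp, h x hx, one_apply]
    rw [h1, det_one, one_mul]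
  · intro x hx y hy
    rw [h x hx, if_neg]
    rintro rfl
    exact hy hx

lemma adjugate_self_nonneg_of_skew {n : Type*} [Fintype n] [DecidableEq n]
    (B : Matrix n n ℝ) (hB : Bᵀ = -B) (i : n) : 0 ≤ B.adjugate i i := by
  rw [adjugate_apply, det_eq_of_unit_rows _ (fun k => k = i)]
  · apply det_nonneg_of_skew
    ext ⟨x, hx⟩ ⟨y, hy⟩
    have := congrFun (congrFun hB x) y
    simpa [toSquareBlockProp, updateRow_apply, hx, hy] using this
  · rintro x rfl y
    simp [Pi.single_apply, eq_comm]

/-- The `2 × 2` minors of the adjugate of a singular matrix vanish (those with a nonzero corner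
suffice here). Two columns `u`, `y` of `adj B` lie in `ker B`, hence so does `u i • y - y i • u`;
its `i`-th coordinate vanishes, so it is killed by the matrix obtained from `B` by replacing the
`i`-th column with the `j`-th unit vector, whose determinant is `adj B i j ≠ 0`. -/
lemma adjugate_mul_adjugate_of_ne_zero {n : Type*} [Fintype n] [DecidableEq n]
    (B : Matrix n n ℝ) (hdet : B.det = 0) {i j : n} (hij : B.adjugate i j ≠ 0) (k l : n) :
    B.adjugate i j * B.adjugate k l = B.adjugate k j * B.adjugate i l := by
  have hcol : ∀ m, B *ᵥ (fun x => B.adjugate x m) = 0 := by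
    intro m
    ext x
    have := congrFun (congrFun (mul_adjugate B) x) m
    simpa [hdet, mul_apply, mulVec, dotProduct] using this
  let z : n → ℝ := B.adjugate i j • (fun x => B.adjugate x l)
    - B.adjugate i l • (fun x => B.adjugate x j)
  have hBz : B *ᵥ z = 0 := by
    simp [z, mulVec_sub, mulVec_smul, hcol]
  have hzi : z i = 0 := by
    simp [z, mul_comm]
  have hd : (B.updateCol i (Pi.single j 1)).det ≠ 0 := by
    rwa [← det_transpose, ← updateRow_transpose, ← adjugate_apply, ← adjugate_transpose,
      transpose_apply]
  have hz : z = 0 := by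
    apply eq_zero_of_mulVec_eq_zero hd
    rw [← hBz]
    ext x
    simp only [mulVec, dotProduct]
    refine Finset.sum_congr rfl fun y _ => ?_
    by_cases hy : y = i
    · simp [hy, hzi]
    · simp [hy]
  have := congrFun hz k
  simp only [z, Pi.sub_apply, Pi.smul_apply, smul_eq_mul, Pi.zero_apply] at this
  linarith

lemma exists_symm_part_adjugate_eq {n : Type*} [Fintype n] [DecidableEq n]
    (B : Matrix n n ℝ) (hB : Bᵀ = -B) :
    ∃ v : n → ℝ, ∀ i j, 2⁻¹ * (B.adjugate i j + B.adjugate j i) = v i * v j := by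
  rcases isEmpty_or_nonempty n with hn | hn
  · exact ⟨0, fun i => hn.elim i⟩
  have hcard : 0 < Fintype.card n := Fintype.card_pos
  have hT : ∀ i j, B.adjugate j i = (-1) ^ (Fintype.card n - 1) * B.adjugate i j := by
    intro i j
    have h := adjugate_transpose B
    rw [hB, ← neg_one_smul ℝ B, adjugate_smul] at h
    exact congrFun (congrFun h i) j
  rcases Nat.even_or_odd (Fintype.card n) with he | ho
  · refine ⟨0, fun i j => ?_⟩
    have hodd : Odd (Fintype.card n - 1) := Nat.Even.sub_odd hcard he odd_one
    rw [hT i j, hodd.neg_one_pow]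
    simp
  have hsymm : ∀ i j, B.adjugate j i = B.adjugate i j := by
    intro i j
    have heven : Even (Fintype.card n - 1) := Nat.Odd.sub_odd ho odd_one
    rw [hT i j, heven.neg_one_pow, one_mul]
  have hdet : B.det = 0 := by
    have h := det_transpose B
    rw [hB, det_neg, ho.neg_one_pow] at h
    linarith
  by_cases hzero : ∀ i j, B.adjugate i j = 0
  · exact ⟨0, fun i j => by simp [hzero]⟩
  push Not at hzero
  obtain ⟨p, q, hpq⟩ := hzero
  -- A rank-one symmetric matrix with a nonzero entry has a nonzero diagonal entry in that row.
  have hpp : B.adjugate p p ≠ 0 := by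
    intro h
    have h2 := adjugate_mul_adjugate_of_ne_zero B hdet hpq q p
    rw [h, hsymm p q, mul_zero] at h2
    exact hpq (mul_self_eq_zero.mp h2)
  have hpos : 0 < B.adjugate p p :=
    lt_of_le_of_ne (adjugate_self_nonneg_of_skew B hB p) hpp.symm
  refine ⟨fun k => B.adjugate k p / √(B.adjugate p p), fun i j => ?_⟩
  have h2 := adjugate_mul_adjugate_of_ne_zero B hdet hpp i j
  rw [hsymm i j, div_mul_div_comm, Real.mul_self_sqrt hpos.le, eq_div_iff hpp, hsymm p j, ← h2]
  ring

/-- Expansion of the adjugate of `diag(a) + B` in the monomials `∏ i ∈ K, a i`: the coefficients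
are the adjugates of the principal submatrices of `B`, extended by zero. -/
lemma adjugate_diagonal_add_apply {n : Type*} [Fintype n] [DecidableEq n]
    (B : Matrix n n ℝ) (a : n → ℝ) (i j : n) :
    (diagonal a + B).adjugate i j = ∑ K : Finset n, (∏ k ∈ K, a k) *
      (if h : i ∉ K ∧ j ∉ K then
        (B.submatrix (fun x : {x // x ∉ K} => (x : n)) (fun x : {x // x ∉ K} => (x : n))).adjugate
          ⟨i, h.1⟩ ⟨j, h.2⟩
      else 0) := by
  let C : n → n → ℝ := fun k l => if k = j then (if i = l then 1 else 0) else B k l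
  let E : n → n → ℝ := fun k l => if k = l then 1 else 0
  -- In the cofactor matrix the `j`-th row carries no diagonal term, so `a j` is replaced by `0`.
  have hrows : (diagonal a + B).updateRow j (Pi.single i 1) =
      Matrix.of ((fun k => Function.update a j 0 k • E k) + C) := by
    ext k l
    by_cases hk : k = j
    · subst hk
      simp [C, Pi.single_apply, eq_comm]
    · simp [C, E, hk, diagonal_apply]
  rw [adjugate_apply, hrows]
  change detRowAlternating ((fun k => Function.update a j 0 k • E k) + C) = _
  rw [AlternatingMap.map_add_univ]
  refine Finset.sum_congr rfl fun K _ => ?_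
  let R : n → n → ℝ := K.piecewise E C
  have hpull : detRowAlternating (K.piecewise (fun k => Function.update a j 0 k • E k) C) =
      (∏ k ∈ K, Function.update a j 0 k) * (Matrix.of R).det := by
    have h := (detRowAlternating (n := n) (R := ℝ)).toMultilinearMap.map_piecewise_smul
      (Function.update a j 0) R K
    refine Eq.trans ?_ h
    change detRowAlternating _ = detRowAlternating _
    congr 1
    funext k
    by_cases hk : k ∈ K <;> simp [R, hk]
  rw [hpull]
  by_cases hj : j ∈ K
  · rw [Finset.prod_eq_zero hj (by simp)]
    simp [hj]
  have hprod : ∏ k ∈ K, Function.update a j 0 k = ∏ k ∈ K, a k := by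
    refine Finset.prod_congr rfl fun k hk => ?_
    rw [Function.update_of_ne]
    rintro rfl
    exact hj hk
  rw [hprod]
  congr 1
  by_cases hi : i ∈ K
  · rw [dif_neg (by simp [hi])]
    -- The rows `i` and `j` are both the `i`-th unit vector.
    have hne : i ≠ j := by
      rintro rfl
      exact hj hi
    refine det_zero_of_row_eq hne ?_
    funext l
    simp [R, C, E, hi, hj]
  · rw [dif_pos ⟨hi, hj⟩, adjugate_apply, det_eq_of_unit_rows _ (fun k => k ∈ K)]
    · congr 1
      ext ⟨x, hx⟩ ⟨y, hy⟩
      by_cases hxj : x = j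
      · subst hxj
        simp [toSquareBlockProp, R, C, hx, Pi.single_apply, eq_comm]
      · simp [toSquareBlockProp, R, C, hx, hxj, updateRow_apply]
    · intro x hx y
      simp [R, E, hx]

/-- Matrix-algebra content of Lemma 4: for `B` real skew-symmetric there are
vectors `v_K` (independent of the diagonal entries) such that whenever
`M = diag(a) + B` is invertible,
`det M · ½(M⁻¹ + (M⁻¹)ᵀ) = Σ_K (Π_{i∈K} a_i) v_K v_Kᵀ`; in particular when all
`a_i > 0` this matrix is a nonnegative combination of rank-one positive
semidefinite matrices, hence positive semidefinite. -/
theorem det_smul_symm_part_inv_eq_sum_outer (N : ℕ)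
    (B : Matrix (Fin N) (Fin N) ℝ) (hB : Bᵀ = -B) :
    ∃ v : Finset (Fin N) → (Fin N → ℝ),
      (∀ a : Fin N → ℝ, IsUnit (Matrix.diagonal a + B) →
        (Matrix.diagonal a + B).det •
            ((2⁻¹ : ℝ) • ((Matrix.diagonal a + B)⁻¹ + ((Matrix.diagonal a + B)⁻¹)ᵀ))
          = ∑ K : Finset (Fin N), (∏ i ∈ K, a i) • Matrix.vecMulVec (v K) (v K)) ∧
      (∀ a : Fin N → ℝ, (∀ i, 0 < a i) → IsUnit (Matrix.diagonal a + B) →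
        ((Matrix.diagonal a + B).det •
            ((2⁻¹ : ℝ) •
              ((Matrix.diagonal a + B)⁻¹ + ((Matrix.diagonal a + B)⁻¹)ᵀ))).PosSemidef) := by
  have hsub : ∀ K : Finset (Fin N), (B.submatrix (fun x : {x // x ∉ K} => (x : Fin N))
      (fun x : {x // x ∉ K} => (x : Fin N)))ᵀ = -(B.submatrix
      (fun x : {x // x ∉ K} => (x : Fin N)) (fun x : {x // x ∉ K} => (x : Fin N))) := by
    intro K
    rw [transpose_submatrix, hB]
    rfl
  choose w hw using fun K => exists_symm_part_adjugate_eq _ (hsub K)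
  let v : Finset (Fin N) → Fin N → ℝ := fun K i => if h : i ∉ K then w K ⟨i, h⟩ else 0
  have key : ∀ a : Fin N → ℝ, IsUnit (Matrix.diagonal a + B) →
        (Matrix.diagonal a + B).det •
            ((2⁻¹ : ℝ) • ((Matrix.diagonal a + B)⁻¹ + ((Matrix.diagonal a + B)⁻¹)ᵀ))
          = ∑ K : Finset (Fin N), (∏ i ∈ K, a i) • Matrix.vecMulVec (v K) (v K) := by
    intro a ha
    have hdet : (Matrix.diagonal a + B).det ≠ 0 := ((isUnit_iff_isUnit_det _).mp ha).ne_zero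
    have hinv : ∀ i j, (Matrix.diagonal a + B).det * (Matrix.diagonal a + B)⁻¹ i j =
        (Matrix.diagonal a + B).adjugate i j := by
      intro i j
      rw [inv_def, Ring.inverse_eq_inv', Matrix.smul_apply, smul_eq_mul, mul_inv_cancel_left₀ hdet]
    ext i j
    have hL : ((Matrix.diagonal a + B).det •
        ((2⁻¹ : ℝ) • ((Matrix.diagonal a + B)⁻¹ + ((Matrix.diagonal a + B)⁻¹)ᵀ))) i j =
        2⁻¹ * ((Matrix.diagonal a + B).adjugate i j + (Matrix.diagonal a + B).adjugate j i) := by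
      rw [← hinv i j, ← hinv j i]
      simp only [Matrix.smul_apply, Matrix.add_apply, transpose_apply, smul_eq_mul]
      ring
    rw [hL, adjugate_diagonal_add_apply, adjugate_diagonal_add_apply, ← Finset.sum_add_distrib,
      Finset.mul_sum, Matrix.sum_apply]
    refine Finset.sum_congr rfl fun K _ => ?_
    rw [Matrix.smul_apply, vecMulVec_apply, smul_eq_mul, ← mul_add, mul_left_comm]
    congr 1
    by_cases hi : i ∈ K
    · simp [v, hi]
    by_cases hj : j ∈ K
    · simp [v, hj]
    have := hw K ⟨i, hi⟩ ⟨j, hj⟩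
    simpa only [v, hi, hj, not_false_eq_true, and_self, dite_true] using this
  refine ⟨v, key, fun a hpos ha => ?_⟩
  rw [key a ha]
  refine posSemidef_sum _ fun K _ => PosSemidef.smul ?_ (Finset.prod_nonneg fun i _ => (hpos i).le)
  simpa using posSemidef_vecMulVec_self_star (v K)
end
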